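/- arXiv:1305.2171 — 4 statements merged into one kernel-verified Lean document; each statement's English description precedes it below -/
import Mathlib

section
/- Let ι be a finite type, F the flip matrix on index type ι × ι, and R : Matrix (ι × ι) (ι × ι) ℂ an arbitrary matrix. Set Φ := F * R. Then on the triple index type ι × ι × ι one has the identity Φ₂₃ * Φ₁₂ * Φ₂₃ = (F₂₃ * F₁₂ * F₂₃) * (R₁₂ * R₁₃ * R₂₃). -/
/-! Since placement is multiplicative, the left side is `F₂₃ R₂₃ F₁₂ R₁₂ F₂₃ R₂₃`. Conjugation by a
placed flip permutes the tensor positions, which gives `R₂₃ F₁₂ = F₁₂ R₁₃`, `R₁₂ F₂₃ = F₂₃ R₁₃` and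
`R₁₃ F₂₃ = F₂₃ R₁₂`; moving the flips to the left with these relations yields the right side. -/

open Matrix

noncomputable section

/-- The flip matrix on index type `ι × ι`. -/
def flipM (ι : Type*) [DecidableEq ι] : Matrix (ι × ι) (ι × ι) ℂ :=
  fun p q => if p.1 = q.2 ∧ p.2 = q.1 then 1 else 0

/-- Placement of a matrix on positions (1,2) of the triple index type `ι × ι × ι`. -/
def pl12 {ι : Type*} [DecidableEq ι] (A : Matrix (ι × ι) (ι × ι) ℂ) :
    Matrix (ι × ι × ι) (ι × ι × ι) ℂ :=
  fun x y => if x.2.2 = y.2.2 then A (x.1, x.2.1) (y.1, y.2.1) else 0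

/-- Placement of a matrix on positions (1,3) of the triple index type `ι × ι × ι`. -/
def pl13 {ι : Type*} [DecidableEq ι] (A : Matrix (ι × ι) (ι × ι) ℂ) :
    Matrix (ι × ι × ι) (ι × ι × ι) ℂ :=
  fun x y => if x.2.1 = y.2.1 then A (x.1, x.2.2) (y.1, y.2.2) else 0

/-- Placement of a matrix on positions (2,3) of the triple index type `ι × ι × ι`. -/
def pl23 {ι : Type*} [DecidableEq ι] (A : Matrix (ι × ι) (ι × ι) ℂ) :
    Matrix (ι × ι × ι) (ι × ι × ι) ℂ :=
  fun x y => if x.1 = y.1 then A (x.2.1, x.2.2) (y.2.1, y.2.2) else 0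

section

variable {ι : Type*} [DecidableEq ι]

/-- The placed flip is the permutation matrix of the swap of the first two positions. -/
lemma pl12_flipM (x y : ι × ι × ι) :
    pl12 (flipM ι) x y = if x = (y.2.1, y.1, y.2.2) then 1 else 0 := by
  obtain ⟨a, b, c⟩ := x
  obtain ⟨d, e, f⟩ := y
  simp only [pl12, flipM, Prod.mk.injEq]
  split_ifs <;> simp_all

/-- The placed flip is the permutation matrix of the swap of the last two positions. -/
lemma pl23_flipM (x y : ι × ι × ι) :
    pl23 (flipM ι) x y = if x = (y.1, y.2.2, y.2.1) then 1 else 0 := by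
  obtain ⟨a, b, c⟩ := x
  obtain ⟨d, e, f⟩ := y
  simp only [pl23, flipM, Prod.mk.injEq]
  split_ifs <;> simp_all

variable [Fintype ι]

lemma pl12_mul (A B : Matrix (ι × ι) (ι × ι) ℂ) : pl12 (A * B) = pl12 A * pl12 B := by
  ext ⟨a, b, c⟩ ⟨d, e, f⟩
  by_cases h : c = f <;>
    simp [pl12, Matrix.mul_apply, Fintype.sum_prod_type, h]

lemma pl23_mul (A B : Matrix (ι × ι) (ι × ι) ℂ) : pl23 (A * B) = pl23 A * pl23 B := by
  ext ⟨a, b, c⟩ ⟨d, e, f⟩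
  by_cases h : a = d <;>
    simp [pl23, Matrix.mul_apply, Fintype.sum_prod_type, h, Finset.sum_ite_irrel]

lemma mul_pl12_flipM (M : Matrix (ι × ι × ι) (ι × ι × ι) ℂ) (x y : ι × ι × ι) :
    (M * pl12 (flipM ι)) x y = M x (y.2.1, y.1, y.2.2) := by
  simp [Matrix.mul_apply, pl12_flipM]

lemma mul_pl23_flipM (M : Matrix (ι × ι × ι) (ι × ι × ι) ℂ) (x y : ι × ι × ι) :
    (M * pl23 (flipM ι)) x y = M x (y.1, y.2.2, y.2.1) := by
  simp [Matrix.mul_apply, pl23_flipM]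

lemma pl12_flipM_mul (M : Matrix (ι × ι × ι) (ι × ι × ι) ℂ) (x y : ι × ι × ι) :
    (pl12 (flipM ι) * M) x y = M (x.2.1, x.1, x.2.2) y := by
  have h (z : ι × ι × ι) : x = (z.2.1, z.1, z.2.2) ↔ (x.2.1, x.1, x.2.2) = z := by
    grind
  simp [Matrix.mul_apply, pl12_flipM, h]

lemma pl23_flipM_mul (M : Matrix (ι × ι × ι) (ι × ι × ι) ℂ) (x y : ι × ι × ι) :
    (pl23 (flipM ι) * M) x y = M (x.1, x.2.2, x.2.1) y := by
  have h (z : ι × ι × ι) : x = (z.1, z.2.2, z.2.1) ↔ (x.1, x.2.2, x.2.1) = z := by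
    grind
  simp [Matrix.mul_apply, pl23_flipM, h]

lemma pl23_mul_flip12 (R : Matrix (ι × ι) (ι × ι) ℂ) :
    pl23 R * pl12 (flipM ι) = pl12 (flipM ι) * pl13 R := by
  ext x y
  rw [mul_pl12_flipM, pl12_flipM_mul]
  rfl

lemma pl12_mul_flip23 (R : Matrix (ι × ι) (ι × ι) ℂ) :
    pl12 R * pl23 (flipM ι) = pl23 (flipM ι) * pl13 R := by
  ext x y
  rw [mul_pl23_flipM, pl23_flipM_mul]
  rfl

lemma pl13_mul_flip23 (R : Matrix (ι × ι) (ι × ι) ℂ) :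
    pl13 R * pl23 (flipM ι) = pl23 (flipM ι) * pl12 R := by
  ext x y
  rw [mul_pl23_flipM, pl23_flipM_mul]
  rfl

end

theorem stmt1 (ι : Type*) [Fintype ι] [DecidableEq ι]
    (R : Matrix (ι × ι) (ι × ι) ℂ) :
    pl23 (flipM ι * R) * pl12 (flipM ι * R) * pl23 (flipM ι * R) =
      (pl23 (flipM ι) * pl12 (flipM ι) * pl23 (flipM ι)) *
        (pl12 R * pl13 R * pl23 R) := by
  rw [pl12_mul, pl23_mul]
  calc _ = pl23 (flipM ι) * (pl23 R * pl12 (flipM ι)) * (pl12 R * pl23 (flipM ι)) * pl23 R := by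
        simp only [Matrix.mul_assoc]
    _ = pl23 (flipM ι) * pl12 (flipM ι) * (pl13 R * pl23 (flipM ι)) * pl13 R * pl23 R := by
        rw [pl23_mul_flip12, pl12_mul_flip23]
        simp only [Matrix.mul_assoc]
    _ = _ := by
        rw [pl13_mul_flip23]
        simp only [Matrix.mul_assoc]
end
end

section
/- Let ι be a finite type and Φ : Matrix (ι × ι) (ι × ι) ℂ a self-adjoint unitary (Φᴴ = Φ and Φ * Φ = 1) satisfying the braid relation Φ₁₂ * Φ₂₃ * Φ₁₂ = Φ₂₃ * Φ₁₂ * Φ₂₃ on the triple index type ι × ι × ι. Then for every n ≥ 1 there exists a unique monoid homomorphism D from the symmetric group Equiv.Perm (Fin n) to the multiplicative monoid of Matrix (Fin n → ι) (Fin n → ι) ℂ such that for every adjacent transposition, D of the swap of j and j+1 equals the n-fold placement Φ_{j,j+1}; moreover every D(σ) is a unitary matrix. -/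
/-! The adjacent transpositions generate the symmetric group, which gives uniqueness of `D`, and
unitarity since each `Φ_{j,j+1}` is a self-adjoint involution. Existence is the statement that
the Coxeter relations present the symmetric group.

For the latter, let `u i` be the pair (adjacent transposition, `Φ_{i,i+1}`) in the product monoid.
Commutation and braid relations show that every word in `u 0, …, u n` equals a word in
`u 0, …, u (n - 1)` times a descending product `u n * u (n - 1) * ⋯ * u k`
(`exists_eq_mul_descProd`). The permutation part of such an element sends `k` to `n + 1`, so it
determines `k`, and by induction the whole element (`eq_of_map_eq`). Hence the monoid generated by
the pairs is the graph of a homomorphism (`exists_hom_of_symRel`).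

The relations for the placements follow by splitting off the two, three or four coordinates
involved: on `κ × R` the placements have the form `A ⊗ 1`, and `A ↦ A ⊗ 1` is multiplicative. -/
open Matrix

noncomputable section

/-- The `n`-fold placement of a matrix `Φ` on positions `j`, `j'` of the
index type `Fin n → ι`. -/
def nPlace {ι : Type*} [DecidableEq ι] {n : ℕ} (Φ : Matrix (ι × ι) (ι × ι) ℂ)
    (j j' : Fin n) : Matrix (Fin n → ι) (Fin n → ι) ℂ :=
  fun x y =>
    if ∀ k, k ≠ j → k ≠ j' → x k = y k then Φ (x j, x j') (y j, y j') else 0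


/-! ### Normal forms in a monoid with symmetric-group relations -/

/-- The relations of the Coxeter presentation of the symmetric group on `N + 1` letters, imposed on
the elements `u 0, …, u (N - 1)` of a monoid; the values `u i` with `N ≤ i` are irrelevant. -/
structure SymRel {M : Type*} [Monoid M] (u : ℕ → M) (N : ℕ) : Prop where
  sq : ∀ i, i < N → u i * u i = 1
  braid : ∀ i, i + 1 < N → u i * u (i + 1) * u i = u (i + 1) * u i * u (i + 1)
  comm : ∀ i j, i + 1 < j → j < N → u i * u j = u j * u i

/-- The descending product `u (k + d - 1) * ⋯ * u (k + 1) * u k` of `d` factors. -/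
def descProd {M : Type*} [Monoid M] (u : ℕ → M) : ℕ → ℕ → M
  | _, 0 => 1
  | k, d + 1 => descProd u (k + 1) d * u k

lemma descProd_mul_of_lt {M : Type*} [Monoid M] {u : ℕ → M} {N : ℕ} (hu : SymRel u N)
    (j d k : ℕ) (hj : j + 1 < k) (hN : k + d ≤ N) :
    descProd u k d * u j = u j * descProd u k d := by
  induction d generalizing k with
  | zero => simp [descProd]
  | succ d ih =>
    rw [descProd, mul_assoc, ← hu.comm j k hj (by omega), ← mul_assoc,
      ih (k + 1) (by omega) (by omega), mul_assoc]

/-- Moving a generator from the right to the left of a descending product lowers its index by one: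
this is where the braid relation enters. -/
lemma descProd_mul_of_gt {M : Type*} [Monoid M] {u : ℕ → M} {N : ℕ} (hu : SymRel u N)
    (j d k : ℕ) (hj : k ≤ j) (hjd : j + 1 < k + d) (hN : k + d ≤ N) :
    descProd u k d * u (j + 1) = u j * descProd u k d := by
  induction d generalizing k with
  | zero => omega
  | succ d ih =>
    rcases hj.eq_or_lt with rfl | hlt
    · obtain ⟨e, rfl⟩ : ∃ e, d = e + 1 := ⟨d - 1, by omega⟩
      have hb := hu.braid k (by omega)
      have hc := descProd_mul_of_lt hu k e (k + 1 + 1) (by omega) (by omega)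
      simp only [descProd]
      calc descProd u (k + 1 + 1) e * u (k + 1) * u k * u (k + 1)
          = descProd u (k + 1 + 1) e * (u (k + 1) * u k * u (k + 1)) := by simp only [mul_assoc]
        _ = (descProd u (k + 1 + 1) e * u k) * u (k + 1) * u k := by
            rw [← hb]; simp only [mul_assoc]
        _ = u k * (descProd u (k + 1 + 1) e * u (k + 1) * u k) := by
            rw [hc]; simp only [mul_assoc]
    · rw [descProd, mul_assoc, hu.comm k (j + 1) (by omega) (by omega), ← mul_assoc,
        ih (k + 1) (by omega) (by omega) (by omega), mul_assoc]

/-- Every product of `u 0, …, u n` is a product of `u 0, …, u (n - 1)` followed by one of the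
`n + 2` descending products that start with `u n` (the empty one included). -/
lemma exists_eq_mul_descProd {M : Type*} [Monoid M] {u : ℕ → M} {N n : ℕ} (hu : SymRel u N)
    (hn : n + 1 ≤ N) (x : M) (hx : x ∈ Submonoid.closure (u '' Set.Iio (n + 1))) :
    ∃ g ∈ Submonoid.closure (u '' Set.Iio n), ∃ k d, k + d = n + 1 ∧ x = g * descProd u k d := by
  induction hx using Submonoid.closure_induction_right with
  | one => exact ⟨1, one_mem _, n + 1, 0, rfl, by simp [descProd]⟩
  | mul_right x hx y hy ih =>
    obtain ⟨g, hg, k, d, hkd, rfl⟩ := ih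
    obtain ⟨j, hj, rfl⟩ := hy
    have hj' : j < n + 1 := hj
    have gen : ∀ i, i < n → u i ∈ Submonoid.closure (u '' Set.Iio n) := fun i hi =>
      Submonoid.subset_closure ⟨i, hi, rfl⟩
    rcases lt_trichotomy j k with h | rfl | h
    · rcases Nat.lt_or_ge (j + 1) k with h1 | h1
      · refine ⟨g * u j, mul_mem hg (gen j (by omega)), k, d, hkd, ?_⟩
        rw [mul_assoc, descProd_mul_of_lt hu j d k h1 (by omega), mul_assoc]
      · obtain rfl : k = j + 1 := by omega
        exact ⟨g, hg, j, d + 1, by omega, by rw [descProd, mul_assoc]⟩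
    · obtain ⟨e, rfl⟩ : ∃ e, d = e + 1 := ⟨d - 1, by omega⟩
      refine ⟨g, hg, j + 1, e, by omega, ?_⟩
      rw [descProd, mul_assoc, mul_assoc, hu.sq j (by omega), mul_one]
    · obtain ⟨i, rfl⟩ : ∃ i, j = i + 1 := ⟨j - 1, by omega⟩
      refine ⟨g * u i, mul_mem hg (gen i (by omega)), k, d, hkd, ?_⟩
      rw [mul_assoc, descProd_mul_of_gt hu i d k (by omega) (by omega) (by omega), mul_assoc]

lemma map_descProd_apply {M : Type*} [Monoid M] {u : ℕ → M} {N : ℕ} (p : M →* Equiv.Perm ℕ)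
    (hp : ∀ i, i < N → p (u i) = Equiv.swap i (i + 1)) (d k : ℕ) (hN : k + d ≤ N) :
    p (descProd u k d) k = k + d := by
  induction d generalizing k with
  | zero => simp [descProd]
  | succ d ih =>
    rw [descProd, map_mul, hp k (by omega), Equiv.Perm.mul_apply, Equiv.swap_apply_left,
      ih (k + 1) (by omega)]
    omega

lemma map_closure_apply {M : Type*} [Monoid M] {u : ℕ → M} {n : ℕ} (p : M →* Equiv.Perm ℕ)
    (hp : ∀ i, i < n → p (u i) = Equiv.swap i (i + 1)) (x : M)
    (hx : x ∈ Submonoid.closure (u '' Set.Iio n)) : p x (n + 1) = n + 1 := by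
  induction hx using Submonoid.closure_induction with
  | mem x hx =>
    obtain ⟨i, hi, rfl⟩ := hx
    have hi' : i < n := hi
    rw [hp i hi', Equiv.swap_apply_of_ne_of_ne (by omega) (by omega)]
  | one => simp
  | mul x y _ _ hx hy => rw [map_mul, Equiv.Perm.mul_apply, hy, hx]

/-- An element of the monoid generated by the `u i` is determined by its underlying permutation.
The letter sent to the top letter `n + 1` tells which descending product occurs in the
normal form, so that it can be cancelled. -/
lemma eq_of_map_eq {M : Type*} [Monoid M] {u : ℕ → M} {N : ℕ} (hu : SymRel u N)
    (p : M →* Equiv.Perm ℕ) (hp : ∀ i, i < N → p (u i) = Equiv.swap i (i + 1))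
    (n : ℕ) (hn : n ≤ N) (x y : M) (hx : x ∈ Submonoid.closure (u '' Set.Iio n))
    (hy : y ∈ Submonoid.closure (u '' Set.Iio n)) (hxy : p x = p y) : x = y := by
  induction n generalizing x y with
  | zero =>
    have h0 : u '' Set.Iio 0 = ∅ := by ext; simp
    rw [h0, Submonoid.closure_empty, Submonoid.mem_bot] at hx hy
    rw [hx, hy]
  | succ n ih =>
    obtain ⟨g, hg, k, d, hkd, rfl⟩ := exists_eq_mul_descProd hu hn x hx
    obtain ⟨g', hg', k', d', hkd', rfl⟩ := exists_eq_mul_descProd hu hn y hy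
    have key : ∀ f ∈ Submonoid.closure (u '' Set.Iio n), ∀ a b, a + b = n + 1 →
        p (f * descProd u a b) a = n + 1 := by
      intro f hf a b hab
      rw [map_mul, Equiv.Perm.mul_apply, map_descProd_apply p hp b a (by omega), hab,
        map_closure_apply p (fun i hi => hp i (by omega)) f hf]
    have h1 := key g hg k d hkd
    have h2 := key g' hg' k' d' hkd'
    rw [← hxy] at h2
    obtain rfl : k = k' := (p (g * descProd u k d)).injective (h1.trans h2.symm)
    obtain rfl : d = d' := by omega
    rw [map_mul, map_mul] at hxy
    rw [ih (by omega) g g' hg hg' (mul_right_cancel hxy)]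

/-- The universal property of the Coxeter presentation of the symmetric group. -/
lemma exists_hom_of_symRel {M : Type*} [Monoid M] (m : ℕ) (s : ℕ → M) (hs : SymRel s m) :
    ∃ D : Equiv.Perm (Fin (m + 1)) →* M,
      ∀ i : Fin m, D (Equiv.swap i.castSucc i.succ) = s i := by
  -- The graph of `D` is the submonoid of `Perm (Fin (m + 1)) × M` generated by the pairs `u i`.
  let t : ℕ → Equiv.Perm (Fin (m + 1)) := fun i =>
    if h : i < m then Equiv.swap (Fin.castSucc ⟨i, h⟩) (Fin.succ ⟨i, h⟩) else 1
  let u : ℕ → Equiv.Perm (Fin (m + 1)) × M := fun i => (t i, s i)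
  let ext : Equiv.Perm (Fin (m + 1)) →* Equiv.Perm ℕ :=
    Equiv.Perm.extendDomainHom (Fin.equivSubtype (n := m + 1))
  have hinj : Function.Injective ext := Equiv.Perm.extendDomainHom_injective _
  have ht : ∀ i, i < m → ext (t i) = Equiv.swap i (i + 1) := by
    intro i hi
    simp only [t, dif_pos hi]
    ext a
    simp only [ext, Equiv.Perm.extendDomainHom_apply]
    by_cases ha : a < m + 1
    · rw [Equiv.Perm.extendDomain_apply_subtype (p := fun a => a < m + 1) _
        Fin.equivSubtype ha]
      simp only [Equiv.swap_apply_def, Fin.equivSubtype, Equiv.coe_fn_mk, Equiv.coe_fn_symm_mk,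
        Fin.ext_iff, Fin.val_castSucc, Fin.val_succ]
      split_ifs <;> simp
    · rw [Equiv.Perm.extendDomain_apply_not_subtype (p := fun a => a < m + 1) _
        Fin.equivSubtype ha,
        Equiv.swap_apply_of_ne_of_ne (by omega) (by omega)]
  have swap_rel : SymRel (fun i => Equiv.swap i (i + 1) : ℕ → Equiv.Perm ℕ) m := by
    refine ⟨fun i _ => Equiv.swap_mul_self _ _, fun i _ => ?_, fun i j hij _ => ?_⟩
    · ext a
      simp only [Equiv.Perm.mul_apply, Equiv.swap_apply_def]
      grind
    · ext a
      simp only [Equiv.Perm.mul_apply, Equiv.swap_apply_def]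
      grind
  have hu : SymRel u m := by
    refine ⟨fun i hi => Prod.ext (hinj ?_) (hs.sq i hi),
      fun i hi => Prod.ext (hinj ?_) (hs.braid i hi),
      fun i j hij hj => Prod.ext (hinj ?_) (hs.comm i j hij hj)⟩
    · simp [u, ht i hi]
    · simpa [u, ht i (by omega), ht (i + 1) hi] using swap_rel.braid i hi
    · simpa [u, ht i (by omega), ht j hj] using swap_rel.comm i j hij hj
  let G := Submonoid.closure (u '' Set.Iio m)
  let q : G →* Equiv.Perm (Fin (m + 1)) := (MonoidHom.fst _ _).comp G.subtype
  have hq : Function.Bijective q := by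
    constructor
    · rintro ⟨x, hx⟩ ⟨y, hy⟩ hxy
      exact Subtype.ext (eq_of_map_eq hu (ext.comp (MonoidHom.fst _ _)) (fun i hi => ht i hi) m
        le_rfl x y hx hy (congrArg ext hxy))
    · rw [← MonoidHom.mrange_eq_top, eq_top_iff, ← Equiv.Perm.mclosure_swap_castSucc_succ m,
        Submonoid.closure_le]
      rintro _ ⟨i, rfl⟩
      exact ⟨⟨u i, Submonoid.subset_closure ⟨i, i.2, rfl⟩⟩, by simp [q, u, t]; rfl⟩
  let e := MulEquiv.ofBijective q hq
  refine ⟨((MonoidHom.snd _ _).comp G.subtype).comp e.symm.toMonoidHom, fun i => ?_⟩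
  have he : e ⟨u i, Submonoid.subset_closure ⟨i, i.2, rfl⟩⟩
      = Equiv.swap i.castSucc i.succ := by
    simp [e, q, u, t]
    rfl
  rw [← he]
  simp [u]

/-! ### Placements as amplifications -/

/-- The amplification `A ⊗ 1` of a matrix, transported along a factorization `e` of the index
type. -/
def amplify {X κ R : Type*} [DecidableEq R] (e : X ≃ κ × R) (A : Matrix κ κ ℂ) : Matrix X X ℂ :=
  (Matrix.kroneckerMap (· * ·) A (1 : Matrix R R ℂ)).submatrix e e

lemma amplify_apply {X κ R : Type*} [DecidableEq R] (e : X ≃ κ × R) (A : Matrix κ κ ℂ) (x y : X) :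
    amplify e A x y = if (e x).2 = (e y).2 then A (e x).1 (e y).1 else 0 := by
  simp [amplify, Matrix.one_apply]

lemma amplify_mul {X κ R : Type*} [Fintype X] [Fintype κ] [Fintype R] [DecidableEq R]
    (e : X ≃ κ × R) (A B : Matrix κ κ ℂ) :
    amplify e (A * B) = amplify e A * amplify e B := by
  rw [amplify, amplify, amplify, Matrix.submatrix_mul_equiv, ← Matrix.mul_kronecker_mul, mul_one]

lemma amplify_one {X κ R : Type*} [DecidableEq X] [DecidableEq κ] [DecidableEq R]
    (e : X ≃ κ × R) : amplify e (1 : Matrix κ κ ℂ) = 1 := by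
  rw [amplify, Matrix.one_kronecker_one, Matrix.submatrix_one_equiv]

/-- Separates the coordinates `a`, `b` from the others. -/
def split2 {ι : Type*} {n : ℕ} (a b : Fin n) (hab : a ≠ b) :
    (Fin n → ι) ≃ (ι × ι) × ({k : Fin n // k ≠ a ∧ k ≠ b} → ι) :=
  Equiv.ofBijective (fun x => ((x a, x b), fun k => x k)) <| by
    constructor
    · intro x y h
      simp only [Prod.mk.injEq, funext_iff, Subtype.forall] at h
      funext k
      grind
    · rintro ⟨⟨v, w⟩, f⟩
      refine ⟨fun k => if h : k ≠ a ∧ k ≠ b then f ⟨k, h⟩ else if k = a then v else w, ?_⟩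
      refine Prod.ext (Prod.ext ?_ ?_) (funext fun k => ?_)
      · simp
      · simp [hab.symm]
      · simp [k.2.1, k.2.2]

/-- Separates the coordinates `a`, `b`, `c` from the others. -/
def split3 {ι : Type*} {n : ℕ} (a b c : Fin n) (hab : a ≠ b) (hac : a ≠ c) (hbc : b ≠ c) :
    (Fin n → ι) ≃ (ι × ι × ι) × ({k : Fin n // k ≠ a ∧ k ≠ b ∧ k ≠ c} → ι) :=
  Equiv.ofBijective (fun x => ((x a, x b, x c), fun k => x k)) <| by
    constructor
    · intro x y h
      simp only [Prod.mk.injEq, funext_iff, Subtype.forall] at h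
      funext k
      grind
    · rintro ⟨⟨v, w, z⟩, f⟩
      refine ⟨fun k => if h : k ≠ a ∧ k ≠ b ∧ k ≠ c then f ⟨k, h⟩
        else if k = a then v else if k = b then w else z, ?_⟩
      refine Prod.ext (Prod.ext ?_ (Prod.ext ?_ ?_)) (funext fun k => ?_)
      · simp
      · simp [hab.symm]
      · simp [hac.symm, hbc.symm]
      · simp [k.2.1, k.2.2.1, k.2.2.2]

/-- Separates the coordinates `a`, `b` and the coordinates `c`, `d` from the others. -/
def split4 {ι : Type*} {n : ℕ} (a b c d : Fin n) (hab : a ≠ b) (hac : a ≠ c) (had : a ≠ d)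
    (hbc : b ≠ c) (hbd : b ≠ d) (hcd : c ≠ d) :
    (Fin n → ι) ≃
      ((ι × ι) × (ι × ι)) × ({k : Fin n // k ≠ a ∧ k ≠ b ∧ k ≠ c ∧ k ≠ d} → ι) :=
  Equiv.ofBijective (fun x => (((x a, x b), (x c, x d)), fun k => x k)) <| by
    constructor
    · intro x y h
      simp only [Prod.mk.injEq, funext_iff, Subtype.forall] at h
      funext k
      grind
    · rintro ⟨⟨⟨v, w⟩, ⟨z, t⟩⟩, f⟩
      refine ⟨fun k => if h : k ≠ a ∧ k ≠ b ∧ k ≠ c ∧ k ≠ d then f ⟨k, h⟩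
        else if k = a then v else if k = b then w else if k = c then z else t, ?_⟩
      refine Prod.ext (Prod.ext (Prod.ext ?_ ?_) (Prod.ext ?_ ?_)) (funext fun k => ?_)
      · simp
      · simp [hab.symm]
      · simp [hac.symm, hbc.symm]
      · simp [had.symm, hbd.symm, hcd.symm]
      · simp [k.2.1, k.2.2.1, k.2.2.2.1, k.2.2.2.2]

lemma split2_apply {ι : Type*} {n : ℕ} (a b : Fin n) (hab : a ≠ b) (x : Fin n → ι) :
    split2 a b hab x = ((x a, x b), fun k => x k.1) := rfl

lemma split3_apply {ι : Type*} {n : ℕ} (a b c : Fin n) (hab : a ≠ b) (hac : a ≠ c) (hbc : b ≠ c)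
    (x : Fin n → ι) : split3 a b c hab hac hbc x = ((x a, x b, x c), fun k => x k.1) := rfl

lemma split4_apply {ι : Type*} {n : ℕ} (a b c d : Fin n) (hab : a ≠ b) (hac : a ≠ c) (had : a ≠ d)
    (hbc : b ≠ c) (hbd : b ≠ d) (hcd : c ≠ d) (x : Fin n → ι) :
    split4 a b c d hab hac had hbc hbd hcd x = (((x a, x b), (x c, x d)), fun k => x k.1) := rfl

section Placement

variable {ι : Type*} [DecidableEq ι] {n : ℕ}

lemma nPlace_eq_amplify2 (Φ : Matrix (ι × ι) (ι × ι) ℂ) (a b : Fin n) (hab : a ≠ b) :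
    nPlace Φ a b = amplify (split2 a b hab) Φ := by
  ext x y
  rw [amplify_apply]
  simp only [nPlace, split2_apply, funext_iff, Subtype.forall, and_imp]

lemma nPlace_eq_amplify12 (Φ : Matrix (ι × ι) (ι × ι) ℂ) (a b c : Fin n)
    (hab : a ≠ b) (hac : a ≠ c) (hbc : b ≠ c) :
    nPlace Φ a b = amplify (split3 a b c hab hac hbc) (pl12 Φ) := by
  ext x y
  rw [amplify_apply]
  simp only [nPlace, pl12, split3_apply, funext_iff, Subtype.forall, and_imp]
  refine (if_congr ⟨fun h => ?_, fun h => ?_⟩ rfl rfl).trans (ite_and ..) <;> grind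

lemma nPlace_eq_amplify23 (Φ : Matrix (ι × ι) (ι × ι) ℂ) (a b c : Fin n)
    (hab : a ≠ b) (hac : a ≠ c) (hbc : b ≠ c) :
    nPlace Φ b c = amplify (split3 a b c hab hac hbc) (pl23 Φ) := by
  ext x y
  rw [amplify_apply]
  simp only [nPlace, pl23, split3_apply, funext_iff, Subtype.forall, and_imp]
  refine (if_congr ⟨fun h => ?_, fun h => ?_⟩ rfl rfl).trans (ite_and ..) <;> grind

lemma nPlace_eq_amplify_left (Φ : Matrix (ι × ι) (ι × ι) ℂ) (a b c d : Fin n)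
    (hab : a ≠ b) (hac : a ≠ c) (had : a ≠ d) (hbc : b ≠ c) (hbd : b ≠ d) (hcd : c ≠ d) :
    nPlace Φ a b = amplify (split4 a b c d hab hac had hbc hbd hcd)
      (Matrix.kroneckerMap (· * ·) Φ 1) := by
  ext x y
  rw [amplify_apply]
  simp only [nPlace, split4_apply, funext_iff, Subtype.forall, and_imp,
    Matrix.kroneckerMap_apply, Matrix.one_apply, Prod.mk.injEq, mul_ite, mul_one, mul_zero]
  refine (if_congr ⟨fun h => ?_, fun h => ?_⟩ rfl rfl).trans (ite_and ..) <;> grind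

lemma nPlace_eq_amplify_right (Φ : Matrix (ι × ι) (ι × ι) ℂ) (a b c d : Fin n)
    (hab : a ≠ b) (hac : a ≠ c) (had : a ≠ d) (hbc : b ≠ c) (hbd : b ≠ d) (hcd : c ≠ d) :
    nPlace Φ c d = amplify (split4 a b c d hab hac had hbc hbd hcd)
      (Matrix.kroneckerMap (· * ·) 1 Φ) := by
  ext x y
  rw [amplify_apply]
  simp only [nPlace, split4_apply, funext_iff, Subtype.forall, and_imp,
    Matrix.kroneckerMap_apply, Matrix.one_apply, Prod.mk.injEq, ite_mul, one_mul, zero_mul]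
  refine (if_congr ⟨fun h => ?_, fun h => ?_⟩ rfl rfl).trans (ite_and ..) <;> grind

lemma nPlace_conjTranspose (Φ : Matrix (ι × ι) (ι × ι) ℂ) (a b : Fin n) :
    (nPlace Φ a b)ᴴ = nPlace Φᴴ a b := by
  ext x y
  simp only [nPlace, Matrix.conjTranspose_apply, apply_ite star, star_zero]
  exact if_congr (by simp only [eq_comm]) rfl rfl

variable [Fintype ι]

lemma nPlace_sq (Φ : Matrix (ι × ι) (ι × ι) ℂ) (hunit : Φ * Φ = 1) (a b : Fin n) (hab : a ≠ b) :
    nPlace Φ a b * nPlace Φ a b = 1 := by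
  rw [nPlace_eq_amplify2 Φ a b hab, ← amplify_mul, hunit, amplify_one]

lemma nPlace_braid (Φ : Matrix (ι × ι) (ι × ι) ℂ)
    (hbraid : pl12 Φ * pl23 Φ * pl12 Φ = pl23 Φ * pl12 Φ * pl23 Φ) (a b c : Fin n)
    (hab : a ≠ b) (hac : a ≠ c) (hbc : b ≠ c) :
    nPlace Φ a b * nPlace Φ b c * nPlace Φ a b = nPlace Φ b c * nPlace Φ a b * nPlace Φ b c := by
  rw [nPlace_eq_amplify12 Φ a b c hab hac hbc, nPlace_eq_amplify23 Φ a b c hab hac hbc]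
  simp only [← amplify_mul, hbraid]

lemma nPlace_comm (Φ : Matrix (ι × ι) (ι × ι) ℂ) (a b c d : Fin n)
    (hab : a ≠ b) (hac : a ≠ c) (had : a ≠ d) (hbc : b ≠ c) (hbd : b ≠ d) (hcd : c ≠ d) :
    nPlace Φ a b * nPlace Φ c d = nPlace Φ c d * nPlace Φ a b := by
  rw [nPlace_eq_amplify_left Φ a b c d hab hac had hbc hbd hcd,
    nPlace_eq_amplify_right Φ a b c d hab hac had hbc hbd hcd]
  simp only [← amplify_mul, ← Matrix.mul_kronecker_mul, mul_one, one_mul]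

end Placement

/-! ### The representation -/

theorem stmt3 (ι : Type*) [Fintype ι] [DecidableEq ι]
    (Φ : Matrix (ι × ι) (ι × ι) ℂ)
    (hsa : Φᴴ = Φ) (hunit : Φ * Φ = 1)
    (hbraid : pl12 Φ * pl23 Φ * pl12 Φ = pl23 Φ * pl12 Φ * pl23 Φ) :
    ∀ n : ℕ, 1 ≤ n →
      (∃! D : Equiv.Perm (Fin n) →* Matrix (Fin n → ι) (Fin n → ι) ℂ,
          ∀ (j : Fin n) (h : (j : ℕ) + 1 < n),
            D (Equiv.swap j ⟨(j : ℕ) + 1, h⟩) = nPlace Φ j ⟨(j : ℕ) + 1, h⟩) ∧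
      (∀ D : Equiv.Perm (Fin n) →* Matrix (Fin n → ι) (Fin n → ι) ℂ,
          (∀ (j : Fin n) (h : (j : ℕ) + 1 < n),
            D (Equiv.swap j ⟨(j : ℕ) + 1, h⟩) = nPlace Φ j ⟨(j : ℕ) + 1, h⟩) →
          ∀ σ : Equiv.Perm (Fin n), D σ ∈ Matrix.unitaryGroup (Fin n → ι) ℂ) := by
  intro n hn
  obtain ⟨m, rfl⟩ : ∃ m, n = m + 1 := ⟨n - 1, by omega⟩
  let s : ℕ → Matrix (Fin (m + 1) → ι) (Fin (m + 1) → ι) ℂ := fun i =>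
    if h : i < m then nPlace Φ (Fin.castSucc ⟨i, h⟩) (Fin.succ ⟨i, h⟩) else 1
  have hs_eq : ∀ i (h : i < m), s i = nPlace Φ (Fin.castSucc ⟨i, h⟩) (Fin.succ ⟨i, h⟩) :=
    fun i h => dif_pos h
  have hs : SymRel s m := by
    refine ⟨fun i hi => ?_, fun i hi => ?_, fun i j hij hj => ?_⟩
    · rw [hs_eq i hi]
      exact nPlace_sq Φ hunit _ _ (by simp [Fin.ext_iff])
    · rw [hs_eq i (by omega), hs_eq (i + 1) hi]
      exact nPlace_braid Φ hbraid _ _ _ (by simp [Fin.ext_iff]) (by simp [Fin.ext_iff]; omega)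
        (by simp [Fin.ext_iff])
    · rw [hs_eq i (by omega), hs_eq j hj]
      apply nPlace_comm Φ <;> simp [Fin.ext_iff] <;> omega
  refine ⟨?_, fun D hD σ => ?_⟩
  · obtain ⟨D, hD⟩ := exists_hom_of_symRel m s hs
    refine ⟨D, fun j h => ?_, fun D' hD' => ?_⟩
    · have hj : (j : ℕ) < m := by omega
      exact (hD ⟨j, hj⟩).trans (hs_eq j hj)
    · refine MonoidHom.eq_of_eqOn_denseM (Equiv.Perm.mclosure_swap_castSucc_succ m) ?_
      rintro _ ⟨i, rfl⟩
      exact (hD' i.castSucc (by simp)).trans ((hs_eq i i.2).symm.trans (hD i).symm)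
  · have hle : (⊤ : Submonoid (Equiv.Perm (Fin (m + 1)))) ≤
        (Matrix.unitaryGroup (Fin (m + 1) → ι) ℂ).comap D := by
      rw [← Equiv.Perm.mclosure_swap_castSucc_succ m, Submonoid.closure_le]
      rintro _ ⟨i, rfl⟩
      have hDi : D (Equiv.swap i.castSucc i.succ) = nPlace Φ i.castSucc i.succ :=
        hD i.castSucc (by simp)
      simp only [SetLike.mem_coe, Submonoid.mem_comap]
      rw [hDi, Matrix.mem_unitaryGroup_iff, Matrix.star_eq_conjTranspose, nPlace_conjTranspose,
        hsa]
      exact nPlace_sq Φ hunit _ _ (by simp [Fin.ext_iff])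
    exact hle (Submonoid.mem_top σ)
end
end

section
/- Let Ψ : ℝ → ℂ be almost everywhere measurable with ∫⁻ p in (0,∞), ‖Ψ p‖₊² * ENNReal.ofReal p ∂volume < ∞ (i.e., Ψ ∈ L²((0,∞), p dp)), and suppose Ψ is not almost everywhere zero on (0,∞). Then the lower Lebesgue integral over the region (0,∞) × (−∞,0) ⊆ ℝ² of the function (q₁, q₂) ↦ ENNReal.ofReal ((1/q₁ − 1/q₂)² * ‖Ψ (q₁ − q₂)‖²) with respect to two-dimensional Lebesgue measure is infinite. -/
/-!
For `q₁ > 0 > q₂` both `1 / q₁` and `-1 / q₂` are positive, so the integrand is at least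
`q₁⁻² ‖Ψ (q₁ - q₂)‖²`. Integrating this bound in `q₂` first and substituting `p = q₁ - q₂` gives
`q₁⁻² G(q₁)` with `G(x) = ∫_{p > x} ‖Ψ p‖² dp`, a decreasing function of `x`. As `Ψ` is not almost
everywhere zero on `(0, ∞)`, there is `δ > 0` with `G(δ) > 0`, and the integral is bounded below by
`G(δ) ∫_0^δ x⁻² dx = ∞`.
-/

open MeasureTheory Set

noncomputable section

lemma lintegral_Ioo_one_div_sq {δ : ℝ} (hδ : 0 < δ) :
    ∫⁻ x in Ioo (0 : ℝ) δ, ENNReal.ofReal ((1 / x) ^ 2) = ⊤ := by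
  by_contra h
  have hint : IntegrableOn (fun x : ℝ => (1 / x) ^ 2) (Ioo 0 δ) := by
    refine ⟨by fun_prop, ?_⟩
    rw [hasFiniteIntegral_iff_ofReal (Filter.Eventually.of_forall fun x => by positivity)]
    exact lt_top_iff_ne_top.2 h
  have hint' : IntegrableOn (fun x : ℝ => x ^ (-2 : ℝ)) (Ioo 0 δ) := by
    refine hint.congr_fun (fun x hx => ?_) measurableSet_Ioo
    have hx0 : (0 : ℝ) ≤ x := hx.1.le
    simp [Real.rpow_neg hx0]
  rw [intervalIntegral.integrableOn_Ioo_rpow_iff hδ] at hint'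
  norm_num at hint'

/-- A function that does not vanish almost everywhere on `(0, ∞)` already has positive mass on
`(δ, ∞)` for some `δ > 0`, because these intervals exhaust `(0, ∞)`. -/
lemma exists_lintegral_Ioi_ne_zero (Ψ : ℝ → ℂ) (hmeas : AEMeasurable Ψ (volume : Measure ℝ))
    (hne : 0 < volume {p : ℝ | p ∈ Ioi (0 : ℝ) ∧ Ψ p ≠ 0}) :
    ∃ δ : ℝ, 0 < δ ∧ ∫⁻ p in Ioi δ, ENNReal.ofReal (‖Ψ p‖ ^ 2) ≠ 0 := by
  by_contra! h
  refine hne.ne' ?_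
  have hsub : {p : ℝ | p ∈ Ioi (0 : ℝ) ∧ Ψ p ≠ 0} ⊆
      ⋃ n : ℕ, {p : ℝ | p ∈ Ioi (1 / ((n : ℝ) + 1)) ∧ Ψ p ≠ 0} := by
    rintro p ⟨hp, hΨ⟩
    obtain ⟨n, hn⟩ := exists_nat_one_div_lt (mem_Ioi.1 hp)
    exact mem_iUnion.2 ⟨n, hn, hΨ⟩
  refine measure_mono_null hsub (measure_iUnion_null fun n => ?_)
  have h0 := h (1 / ((n : ℝ) + 1)) (by positivity)
  rw [lintegral_eq_zero_iff' (by fun_prop), Filter.EventuallyEq,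
    ae_restrict_iff' measurableSet_Ioi, ae_iff] at h0
  refine measure_mono_null ?_ h0
  rintro p ⟨hp, hΨ⟩ hcon
  have := hcon hp
  simp only [Pi.zero_apply, ENNReal.ofReal_eq_zero] at this
  have : 0 < ‖Ψ p‖ ^ 2 := by positivity
  linarith

lemma lintegral_Iio_sub_left (g : ℝ → ENNReal) (x : ℝ) :
    ∫⁻ y in Iio (0 : ℝ), g (x - y) = ∫⁻ p in Ioi x, g p := by
  rw [← lintegral_indicator measurableSet_Iio, ← lintegral_indicator measurableSet_Ioi,
    ← lintegral_sub_left_eq_self ((Ioi x).indicator g) x]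
  refine lintegral_congr fun y => ?_
  have hiff : y ∈ Iio (0 : ℝ) ↔ x - y ∈ Ioi x := by
    simp only [mem_Iio, mem_Ioi]
    constructor <;> intro h <;> linarith
  by_cases hy : y ∈ Iio (0 : ℝ)
  · rw [indicator_of_mem hy, indicator_of_mem (hiff.1 hy)]
  · rw [indicator_of_notMem hy, indicator_of_notMem (mt hiff.2 hy)]

theorem stmt9 (Ψ : ℝ → ℂ) (hmeas : AEMeasurable Ψ (volume : Measure ℝ))
    (hL2 : ∫⁻ p in Ioi (0 : ℝ), (‖Ψ p‖₊ : ENNReal) ^ 2 * ENNReal.ofReal p < ⊤)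
    (hne : 0 < volume {p : ℝ | p ∈ Ioi (0 : ℝ) ∧ Ψ p ≠ 0}) :
    ∫⁻ q in (Ioi (0 : ℝ)) ×ˢ (Iio (0 : ℝ)),
        ENNReal.ofReal ((1 / q.1 - 1 / q.2) ^ 2 * ‖Ψ (q.1 - q.2)‖ ^ 2)
        ∂(volume : Measure (ℝ × ℝ)) = ⊤ := by
  obtain ⟨δ, hδ, hG⟩ := exists_lintegral_Ioi_ne_zero Ψ hmeas hne
  have hΨ : AEMeasurable (fun q : ℝ × ℝ => Ψ (q.1 - q.2))
      ((volume : Measure ℝ).prod (volume : Measure ℝ)) :=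
    hmeas.comp_quasiMeasurePreserving (quasiMeasurePreserving_sub volume volume)
  have hF : AEMeasurable
      (fun q : ℝ × ℝ => ENNReal.ofReal ((1 / q.1 - 1 / q.2) ^ 2 * ‖Ψ (q.1 - q.2)‖ ^ 2))
      (((volume : Measure ℝ).restrict (Ioi 0)).prod ((volume : Measure ℝ).restrict (Iio 0))) := by
    rw [Measure.prod_restrict]
    have h1 : Measurable (fun q : ℝ × ℝ => (1 / q.1 - 1 / q.2) ^ 2) := by fun_prop
    exact (h1.aemeasurable.mul (hΨ.restrict.norm.pow_const 2)).ennreal_ofReal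
  rw [Measure.volume_eq_prod, ← Measure.prod_restrict, lintegral_prod _ hF, eq_top_iff]
  calc (⊤ : ENNReal)
      = (∫⁻ x in Ioo (0 : ℝ) δ, ENNReal.ofReal ((1 / x) ^ 2)) *
          ∫⁻ p in Ioi δ, ENNReal.ofReal (‖Ψ p‖ ^ 2) := by
        rw [lintegral_Ioo_one_div_sq hδ, ENNReal.top_mul hG]
    _ = ∫⁻ x in Ioo (0 : ℝ) δ, ENNReal.ofReal ((1 / x) ^ 2) *
          ∫⁻ p in Ioi δ, ENNReal.ofReal (‖Ψ p‖ ^ 2) :=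
        (lintegral_mul_const _ (by fun_prop)).symm
    _ ≤ ∫⁻ x in Ioo (0 : ℝ) δ, ∫⁻ y in Iio (0 : ℝ),
          ENNReal.ofReal ((1 / x - 1 / y) ^ 2 * ‖Ψ (x - y)‖ ^ 2) := by
        refine setLIntegral_mono' measurableSet_Ioo fun x hx => ?_
        calc _ ≤ ENNReal.ofReal ((1 / x) ^ 2) *
              ∫⁻ p in Ioi x, ENNReal.ofReal (‖Ψ p‖ ^ 2) := by
              gcongr
              exact hx.2.le
          _ = ∫⁻ y in Iio (0 : ℝ), ENNReal.ofReal ((1 / x) ^ 2) *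
              ENNReal.ofReal (‖Ψ (x - y)‖ ^ 2) := by
              rw [← lintegral_Iio_sub_left (fun p => ENNReal.ofReal (‖Ψ p‖ ^ 2)),
                lintegral_const_mul' _ _ ENNReal.ofReal_ne_top]
          _ ≤ _ := by
              refine setLIntegral_mono' measurableSet_Iio fun y hy => ?_
              rw [← ENNReal.ofReal_mul (by positivity)]
              have hx' : 0 < 1 / x := one_div_pos.2 hx.1
              have hy' : 1 / y < 0 := one_div_neg.2 hy
              gcongr
              linarith
    _ ≤ _ := lintegral_mono_set Ioo_subset_Ioi_self
end
end

section
/- Let 𝒦 and ℋ be complex Hilbert spaces, let K ⊆ 𝒦 and H ⊆ ℋ be standard closed real subspaces, and let T, T' : 𝒦 →L[ℂ] ℋ be bounded ℂ-linear operators. Let H' := {x ∈ ℋ : ∀ h ∈ H, Im ⟪h, x⟫ = 0} be the symplectic complement of H. Then the following are equivalent: (1) ⟪g', T f⟫ = ⟪T' f, g'⟫ for all f ∈ K and g' ∈ H'; (2) for every f ∈ K there exist h, k ∈ H such that T' f = h + i•k and T f = h − i•k. (Condition (2) encodes the operator inclusion T S_K ⊆ S_H T', where S_H is the closed conjugate-linear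 involution f + i•g ↦ f − i•g with domain H + i•H.) -/
/-!
The equivalence holds pointwise in `f`. Writing `x = T' f` and `y = T f`, condition (1) says that
`⟪g', y⟫` is the conjugate of `⟪g', x⟫` for all `g'` in the symplectic complement `H'` of `H`.
This means precisely that `⟪g', x + y⟫` is real and `⟪g', x - y⟫` is imaginary, that is, that
`h = (x + y) / 2` and `k = (x - y) / (2 i)` both lie in the double symplectic complement `H''`.
Since `H` is closed, `H'' = H` (`mem_of_symplectic_bicomplement`): multiplication by `i` carries the
real orthogonal complement of `H` onto `H'`, so this is the double orthogonal complement theorem for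
the real inner product `Re ⟪·,·⟫`.
-/

open scoped InnerProductSpace ComplexConjugate

noncomputable section

/-- A closed real subspace `H` of a complex Hilbert space is standard if
`H ∩ i•H = {0}` and `H + i•H` is dense. -/
def IsStandardSubspace {E : Type*} [NormedAddCommGroup E] [InnerProductSpace ℂ E]
    (H : Submodule ℝ E) : Prop :=
  IsClosed (H : Set E) ∧
  (∀ x ∈ H, ∀ y ∈ H, x = Complex.I • y → x = 0) ∧
  Dense {x : E | ∃ h ∈ H, ∃ k ∈ H, x = h + Complex.I • k}

/-- A closed real subspace contains its double symplectic complement. -/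
theorem mem_of_symplectic_bicomplement {E : Type*} [NormedAddCommGroup E] [InnerProductSpace ℂ E]
    [CompleteSpace E] {H : Submodule ℝ E} (hH : IsClosed (H : Set E)) {v : E}
    (hv : ∀ g : E, (∀ h ∈ H, (⟪h, g⟫_ℂ).im = 0) → (⟪g, v⟫_ℂ).im = 0) : v ∈ H := by
  let _ : InnerProductSpace ℝ E := InnerProductSpace.complexToReal
  have hc : H.topologicalClosure = H := hH.submodule_topologicalClosure_eq
  rw [← hc, ← Submodule.orthogonal_orthogonal_eq_closure, Submodule.mem_orthogonal]
  intro w hw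
  rw [Submodule.mem_orthogonal] at hw
  -- `w` is real-orthogonal to `H`, so `i • w` lies in the symplectic complement.
  have h1 := hv (Complex.I • w) fun h hh => by
    have h2 : (⟪h, w⟫_ℂ).re = 0 := hw h hh
    simp [h2]
  have h3 : (⟪w, v⟫_ℂ).re = 0 := by
    simpa [inner_smul_left] using h1
  exact h3

/-- Pointwise form of the equivalence: the pairs `(h + i • k, h - i • k)` with `h, k ∈ H` are those
satisfying the adjoint relation against the symplectic complement. -/
theorem exists_decomp_iff {E : Type*} [NormedAddCommGroup E] [InnerProductSpace ℂ E]
    [CompleteSpace E] {H : Submodule ℝ E} (hH : IsClosed (H : Set E)) (x y : E) :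
    (∀ g : E, (∀ h ∈ H, (⟪h, g⟫_ℂ).im = 0) → ⟪g, y⟫_ℂ = ⟪x, g⟫_ℂ) ↔
      ∃ h ∈ H, ∃ k ∈ H, x = h + Complex.I • k ∧ y = h - Complex.I • k := by
  constructor
  · intro hxy
    refine ⟨(1 / 2 : ℂ) • (x + y), mem_of_symplectic_bicomplement hH fun g hg => ?_,
      (-Complex.I / 2) • (x - y), mem_of_symplectic_bicomplement hH fun g hg => ?_, ?_, ?_⟩
    · have h1 := hxy g hg
      rw [← inner_conj_symm x g] at h1
      simp [-inner_conj_symm, h1]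
    · have h1 := hxy g hg
      rw [← inner_conj_symm x g] at h1
      simp [-inner_conj_symm, h1]
    · rw [smul_smul, show Complex.I * (-Complex.I / 2) = 1 / 2 by
        linear_combination (-1 / 2) * Complex.I_mul_I]
      module
    · rw [smul_smul, show Complex.I * (-Complex.I / 2) = 1 / 2 by
        linear_combination (-1 / 2) * Complex.I_mul_I]
      module
  · rintro ⟨h, hh, k, hk, rfl, rfl⟩ g hg
    -- A vanishing imaginary part makes the inner products with `h` and `k` symmetric.
    have key : ∀ u ∈ H, ⟪g, u⟫_ℂ = ⟪u, g⟫_ℂ := fun u hu => by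
      rw [← inner_conj_symm g u]
      exact Complex.conj_eq_iff_im.2 (hg u hu)
    simp only [inner_sub_right, inner_add_left, inner_smul_right, inner_smul_left, key h hh,
      key k hk, Complex.conj_I]
    ring

theorem stmt12 {𝒦 ℋ : Type*}
    [NormedAddCommGroup 𝒦] [InnerProductSpace ℂ 𝒦] [CompleteSpace 𝒦]
    [NormedAddCommGroup ℋ] [InnerProductSpace ℂ ℋ] [CompleteSpace ℋ]
    (K : Submodule ℝ 𝒦) (H : Submodule ℝ ℋ)
    (hK : IsStandardSubspace K) (hH : IsStandardSubspace H)
    (T T' : 𝒦 →L[ℂ] ℋ) :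
    -- (1) ⟪g', T f⟫ = ⟪T' f, g'⟫ for all f ∈ K and g' in the symplectic complement of H
    (∀ f ∈ K, ∀ g' : ℋ, (∀ h ∈ H, (⟪h, g'⟫_ℂ).im = 0) →
        ⟪g', T f⟫_ℂ = ⟪T' f, g'⟫_ℂ) ↔
      -- (2) T S_K ⊆ S_H T'
      (∀ f ∈ K, ∃ h ∈ H, ∃ k ∈ H,
        T' f = h + Complex.I • k ∧ T f = h - Complex.I • k) := by
  exact forall₂_congr fun f _ => exists_decomp_iff hH.1 (T' f) (T f)
end
end
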